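/- Let 0 < h_1 < … < h_n < 1 be reals, let P be an invertible real n×n matrix whose columns p_{·,1}, …, p_{·,n} have unit Euclidean norm, let B = (b_{ii'}) be a real symmetric positive definite n×n matrix, let (a_ν) be positive reals with a_ν → ∞, let (B̂_ν) be random real symmetric n×n matrices with B̂_ν → B in probability (entrywise), and set W_ν := P D_{a_ν} B̂_ν D_{a_ν} Pᵀ. Fix q ∈ {1, …, n−1}, and let (u_q(ν)) be a sequence of measurable unit eigenvectors of W_ν associated with λ_q(W_ν) converging in probability to the deterministic unit vector u_q (as in Proposition 3.1(iii)). Then the ℝ^{n−q}-valued random vector (⟨p_{·,q+1}, u_q(ν)⟩ a_ν^{h_{q+1}−h_q}, …, ⟨p_{·,n}, u_q(ν)⟩ a_ν^{h_n−h_q}) converges in probability to x_{q,*}, the unique global minimizer of the function g_{q,α} with α = ⟨p_{·,q}, u_q⟩; moreover, ξ_q(B) := lim_{a→∞} λ_q(P D_a B D_a Pᵀ)/a^{2h_q} equals g_{q,α}(x_{q,*}). -/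

import Mathlib

/-!
Let `u` be a unit eigenvector of `W = P D B̂ D Pᵀ` for `l = λ_q(W)`, and rescale its coordinates
in the columns of `P` to `X_i = ⟨p_i, u⟩ a ^ (h_i - h_q)`. Put `s = l / a ^ (2 h_q)`. The
eigenvalue equation becomes (`rescaled_eqs`)

  `X ⬝ B̂ X = s`  and  `(B̂ X)_i = s a ^ (h_q - h_i) (P⁻¹ u)_i`.

Since `⟨p_i, u⟩` is bounded, `X_i → 0` for `i < q`, and `X_q = ⟨p_q, u⟩ → α`. If `s` stays bounded,
then `(B̂ X)_i → 0` for `i > q`, so in the limit the coordinates `x = (X_i)_{i > q}` solve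
`∑_{j > q} b_{ij} x_j = - b_{iq} α`. The block of `B` on the indices `> q` is positive definite, so
this system determines the limit; it is the critical point equation of `g_{q,α}`, whose solution is
its unique minimizer (`gfun_lt`). Passing to the limit in `X ⬝ B̂ X = s` gives `s → g_{q,α}(x_*)`.

That `s → ξ` as well, and in particular is bounded, follows from the Courant–Fischer principle: as
`B̂ → B` and `B` is positive definite, `(1 - ε) B ≤ B̂ ≤ (1 + ε) B` as quadratic forms with `ε → 0`,
so `λ_q(W)` lies between `(1 ± ε) λ_q(P D B D Pᵀ)` (`eigR_le_mul`, `ratio_tendsto`).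

All of this is deterministic (`tendsto_deterministic`). Convergence in probability is reduced to it
by the subsequence criterion: every subsequence has a further one along which `B̂` and `u` converge
almost surely.
-/

open Matrix MeasureTheory Filter Topology

/-- The `q`-th smallest eigenvalue (`q` 0-indexed) of a real symmetric matrix. -/
noncomputable def eigR {n : ℕ} (M : Matrix (Fin n) (Fin n) ℝ) (q : Fin n) : ℝ :=
  if h : M.IsHermitian then (h.eigenvalues ∘ Tuple.sort h.eigenvalues) q else 0

/-- `D_a := diag(a^{h_1},…,a^{h_n})`. -/
noncomputable def Dmat {n : ℕ} (h : Fin n → ℝ) (a : ℝ) : Matrix (Fin n) (Fin n) ℝ :=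
  Matrix.diagonal fun i => a ^ h i

/-- The `j`-th column of a matrix, as a vector. -/
def col {n : ℕ} (P : Matrix (Fin n) (Fin n) ℝ) (j : Fin n) : Fin n → ℝ := fun i => P i j

/-- The function `g_{q,α}(x) = b_{qq} α² + Σ_{i>q} b_{ii} x_i² + 2α Σ_{i>q} b_{qi} x_i
  + 2 Σ_{q<i<i'} b_{ii'} x_i x_{i'}`. -/
def gfun {n : ℕ} (B : Matrix (Fin n) (Fin n) ℝ) (q : Fin n) (α : ℝ)
    (x : {i : Fin n // q < i} → ℝ) : ℝ :=
  B q q * α ^ 2 + ∑ i : {i : Fin n // q < i}, B i i * x i ^ 2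
    + 2 * α * ∑ i : {i : Fin n // q < i}, B q i * x i
    + 2 * ∑ i : {i : Fin n // q < i}, ∑ j : {i : Fin n // q < i},
        if (i : Fin n) < (j : Fin n) then B i j * x i * x j else 0

/-! ### Sorted eigenvalues and quadratic forms -/

/-- Spectral theorem for the sorted eigenvalues `eigR M`: they are a reordering of the eigenvalues,
and `M` is diagonalized by an orthogonal matrix `U` whose columns follow the sorted order. -/
theorem eigR_decomp {n : ℕ} {M : Matrix (Fin n) (Fin n) ℝ} (hM : M.IsHermitian) :
    Monotone (eigR M) ∧ (∀ i, ∃ j, eigR M i = hM.eigenvalues j) ∧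
      ∃ U : Matrix (Fin n) (Fin n) ℝ, U * Uᵀ = 1 ∧
        ∀ v : Fin n → ℝ, v ⬝ᵥ M *ᵥ v = ∑ i, eigR M i * (Uᵀ *ᵥ v) i ^ 2 := by
  have he : eigR M = hM.eigenvalues ∘ Tuple.sort hM.eigenvalues := by
    funext i; rw [eigR, dif_pos hM]
  set σ := Tuple.sort hM.eigenvalues with hσ
  refine ⟨he ▸ Tuple.monotone_sort _, fun i => ⟨σ i, by rw [he]; rfl⟩, ?_⟩
  set V : Matrix (Fin n) (Fin n) ℝ := (hM.eigenvectorUnitary : Matrix (Fin n) (Fin n) ℝ) with hV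
  have hVV : V * Vᵀ = 1 := by
    have := Unitary.coe_mul_star_self hM.eigenvectorUnitary
    simpa [star_eq_conjTranspose, conjTranspose_eq_transpose_of_trivial] using this
  have hs : M = V * diagonal hM.eigenvalues * Vᵀ := by
    have := hM.spectral_theorem
    rw [Unitary.conjStarAlgAut_apply] at this
    simpa [star_eq_conjTranspose, conjTranspose_eq_transpose_of_trivial, Function.comp_def]
      using this
  have hsub : (V.submatrix id σ)ᵀ = Vᵀ.submatrix σ id := rfl
  refine ⟨V.submatrix id σ, ?_, fun v => ?_⟩
  · rw [hsub, submatrix_mul_equiv, hVV]; simp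
  · have h1 : v ⬝ᵥ M *ᵥ v = ∑ j, hM.eigenvalues j * (Vᵀ *ᵥ v) j ^ 2 := by
      conv_lhs => rw [hs]
      rw [← mulVec_mulVec, ← mulVec_mulVec, dotProduct_mulVec, ← mulVec_transpose]
      simp only [dotProduct, mulVec_diagonal]
      exact Finset.sum_congr rfl fun i _ => by ring
    rw [h1, ← Equiv.sum_comp σ, he]
    rfl

/-- Weyl monotonicity: if `d A ≤ c C` as quadratic forms with `c, d ≥ 0`, then
`d λ_q(A) ≤ c λ_q(C)`. -/
theorem eigR_le_mul {n : ℕ} {A C : Matrix (Fin n) (Fin n) ℝ} (hA : A.IsHermitian)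
    (hC : C.IsHermitian) {c d : ℝ} (hc : 0 ≤ c) (hd : 0 ≤ d)
    (hAC : ∀ v : Fin n → ℝ, d * (v ⬝ᵥ A *ᵥ v) ≤ c * (v ⬝ᵥ C *ᵥ v)) (q : Fin n) :
    d * eigR A q ≤ c * eigR C q := by
  obtain ⟨mA, -, U, hU, hUq⟩ := eigR_decomp hA
  obtain ⟨mC, -, V, hV, hVq⟩ := eigR_decomp hC
  -- A nonzero `v` orthogonal to the eigenvectors of `A` below `q` and to those of `C` above `q`:
  -- these are `n - 1` conditions, encoded as the rows of a square matrix whose row `q` is zero.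
  let N : Matrix (Fin n) (Fin n) ℝ :=
    Matrix.of fun i => if i < q then Uᵀ i else if q < i then Vᵀ i else 0
  have hN : N.det = 0 := det_eq_zero_of_row_eq_zero q fun j => by simp [N]
  obtain ⟨v, hv0, hv⟩ := exists_mulVec_eq_zero_iff.2 hN
  have hUv : ∀ i, i < q → (Uᵀ *ᵥ v) i = 0 := fun i hi => by
    have := congrFun hv i
    simpa [N, mulVec, hi] using this
  have hVv : ∀ i, q < i → (Vᵀ *ᵥ v) i = 0 := fun i hi => by
    have := congrFun hv i
    simpa [N, mulVec, hi, hi.not_gt] using this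
  have hnorm : ∀ Z : Matrix (Fin n) (Fin n) ℝ, Z * Zᵀ = 1 →
      ∑ i, (Zᵀ *ᵥ v) i ^ 2 = v ⬝ᵥ v := fun Z hZ => by
    have : (Zᵀ *ᵥ v) ⬝ᵥ (Zᵀ *ᵥ v) = v ⬝ᵥ v := by
      rw [dotProduct_mulVec, vecMul_transpose, mulVec_mulVec, hZ, one_mulVec]
    rw [← this]; simp [dotProduct, sq]
  have hpos : 0 < v ⬝ᵥ v := by simpa using dotProduct_star_self_pos_iff.2 hv0
  have h1 : eigR A q * (v ⬝ᵥ v) ≤ v ⬝ᵥ A *ᵥ v := by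
    rw [hUq, ← hnorm U hU, Finset.mul_sum]
    refine Finset.sum_le_sum fun i _ => ?_
    rcases lt_or_ge i q with hi | hi
    · simp [hUv i hi]
    · exact mul_le_mul_of_nonneg_right (mA hi) (sq_nonneg _)
  have h2 : v ⬝ᵥ C *ᵥ v ≤ eigR C q * (v ⬝ᵥ v) := by
    rw [hVq, ← hnorm V hV, Finset.mul_sum]
    refine Finset.sum_le_sum fun i _ => ?_
    rcases lt_or_ge q i with hi | hi
    · simp [hVv i hi]
    · exact mul_le_mul_of_nonneg_right (mC hi) (sq_nonneg _)
  have h3 := hAC v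
  have h4 := mul_le_mul_of_nonneg_left h1 hd
  have h5 := mul_le_mul_of_nonneg_left h2 hc
  refine le_of_mul_le_mul_right ?_ hpos
  nlinarith

theorem exists_coercive {n : ℕ} {B : Matrix (Fin n) (Fin n) ℝ} (hB : B.PosDef) (q : Fin n) :
    ∃ m > 0, ∀ v : Fin n → ℝ, m * (v ⬝ᵥ v) ≤ v ⬝ᵥ B *ᵥ v := by
  obtain ⟨hm, hex, U, hU, hUq⟩ := eigR_decomp hB.isHermitian
  let z : Fin n := ⟨0, q.pos⟩
  refine ⟨eigR B z, ?_, fun v => ?_⟩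
  · obtain ⟨j, hj⟩ := hex z
    rw [hj]; exact hB.eigenvalues_pos j
  · have : (Uᵀ *ᵥ v) ⬝ᵥ (Uᵀ *ᵥ v) = v ⬝ᵥ v := by
      rw [dotProduct_mulVec, vecMul_transpose, mulVec_mulVec, hU, one_mulVec]
    rw [hUq, ← this, dotProduct, Finset.mul_sum]
    refine Finset.sum_le_sum fun i _ => ?_
    rw [← sq]
    exact mul_le_mul_of_nonneg_right (hm (Fin.mk_le_of_le_val (Nat.zero_le _))) (sq_nonneg _)

/-- The quadratic form of `E` is bounded by the entrywise `ℓ¹` norm of `E`. -/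
theorem abs_quad_le {n : ℕ} (E : Matrix (Fin n) (Fin n) ℝ) (v : Fin n → ℝ) :
    |v ⬝ᵥ E *ᵥ v| ≤ (∑ i, ∑ j, |E i j|) * (v ⬝ᵥ v) := by
  have hle : ∀ i, v i ^ 2 ≤ v ⬝ᵥ v := fun i => by
    rw [dotProduct, sq]
    exact Finset.single_le_sum (f := fun i => v i * v i) (fun i _ => mul_self_nonneg _)
      (Finset.mem_univ i)
  simp only [dotProduct, mulVec, Finset.mul_sum, Finset.sum_mul (s := Finset.univ (α := Fin n))]
  refine (Finset.abs_sum_le_sum_abs _ _).trans (Finset.sum_le_sum fun i _ => ?_)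
  refine (Finset.abs_sum_le_sum_abs _ _).trans (Finset.sum_le_sum fun j _ => ?_)
  rw [← Finset.mul_sum]
  change _ ≤ _ * (v ⬝ᵥ v)
  have h1 : |v i| * |v j| ≤ v ⬝ᵥ v := by
    nlinarith [hle i, hle j, sq_nonneg (|v i| - |v j|), sq_abs (v i), sq_abs (v j)]
  calc |v i * (E i j * v j)| = |E i j| * (|v i| * |v j|) := by rw [abs_mul, abs_mul]; ring
    _ ≤ _ := mul_le_mul_of_nonneg_left h1 (abs_nonneg _)

theorem quad_W {n : ℕ} (P D B : Matrix (Fin n) (Fin n) ℝ) (hD : Dᵀ = D) (v : Fin n → ℝ) :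
    v ⬝ᵥ (P * D * B * D * Pᵀ) *ᵥ v = (D *ᵥ Pᵀ *ᵥ v) ⬝ᵥ B *ᵥ (D *ᵥ Pᵀ *ᵥ v) := by
  simp only [← mulVec_mulVec]
  rw [dotProduct_mulVec, ← mulVec_transpose, dotProduct_mulVec, ← mulVec_transpose, hD]

theorem herm_W {n : ℕ} (P D B : Matrix (Fin n) (Fin n) ℝ) (hD : Dᵀ = D) (hB : Bᵀ = B) :
    (P * D * B * D * Pᵀ).IsHermitian := by
  rw [IsHermitian, conjTranspose_eq_transpose_of_trivial]
  simp [transpose_mul, hD, hB, Matrix.mul_assoc]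

theorem Dmat_transpose {n : ℕ} (h : Fin n → ℝ) (a : ℝ) : (Dmat h a)ᵀ = Dmat h a := by
  simp [Dmat]

/-! ### The rescaled eigenvalue of a perturbation -/

/-- The limit `ξ` of `λ_q(P D_a B D_a Pᵀ) / a ^ (2 h_q)` is unchanged when `B` is replaced by a
sequence of symmetric matrices converging to it. -/
theorem ratio_tendsto {n : ℕ} (h : Fin n → ℝ) (P B : Matrix (Fin n) (Fin n) ℝ) (hB : B.PosDef)
    (q : Fin n) {ξ : ℝ}
    (hξ : Tendsto (fun c : ℝ => eigR (P * Dmat h c * B * Dmat h c * Pᵀ) q / c ^ (2 * h q))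
      atTop (𝓝 ξ))
    (a : ℕ → ℝ) (ha_pos : ∀ ν, 0 < a ν) (ha : Tendsto a atTop atTop)
    (Bk : ℕ → Matrix (Fin n) (Fin n) ℝ) (hsymm : ∀ ν, (Bk ν).IsSymm)
    (hlim : ∀ i j, Tendsto (fun ν => Bk ν i j) atTop (𝓝 (B i j))) :
    Tendsto (fun ν => eigR (P * Dmat h (a ν) * Bk ν * Dmat h (a ν) * Pᵀ) q / a ν ^ (2 * h q))
      atTop (𝓝 ξ) := by
  obtain ⟨m, hm, hmB⟩ := exists_coercive hB q
  -- With `m` a lower bound for the form of `B`, `|B̂ - B| ≤ ε B` for this `ε`.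
  set ε : ℕ → ℝ := fun ν => (∑ i, ∑ j, |(Bk ν - B) i j|) / m with hε
  have hε0 : Tendsto ε atTop (𝓝 0) := by
    have : Tendsto ε atTop (𝓝 ((∑ i : Fin n, ∑ j : Fin n, |B i j - B i j|) / m)) := by
      refine Tendsto.div_const (tendsto_finsetSum _ fun i _ => tendsto_finsetSum _ fun j _ => ?_) _
      exact ((hlim i j).sub_const _).abs
    simpa using this
  have hεnn : ∀ ν, 0 ≤ ε ν := fun ν => by positivity
  have hquad : ∀ ν (v : Fin n → ℝ), |v ⬝ᵥ Bk ν *ᵥ v - v ⬝ᵥ B *ᵥ v| ≤ ε ν * (v ⬝ᵥ B *ᵥ v) := by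
    intro ν v
    rw [← dotProduct_sub, ← sub_mulVec]
    refine (abs_quad_le _ v).trans ?_
    calc (∑ i, ∑ j, |(Bk ν - B) i j|) * (v ⬝ᵥ v) = ε ν * (m * (v ⬝ᵥ v)) := by
          rw [hε]; field_simp
      _ ≤ _ := mul_le_mul_of_nonneg_left (hmB v) (hεnn ν)
  have hBt : Bᵀ = B := by simpa using hB.isHermitian.eq
  have hr := hξ.comp ha
  have hlow := ((tendsto_const_nhds (x := (1 : ℝ))).sub hε0).mul hr
  have hupp := ((tendsto_const_nhds (x := (1 : ℝ))).add hε0).mul hr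
  simp only [sub_zero, add_zero, one_mul, Function.comp_def] at hlow hupp
  have hW := fun ν => herm_W P (Dmat h (a ν)) (Bk ν) (Dmat_transpose h (a ν)) (hsymm ν)
  have hW' := fun ν => herm_W P (Dmat h (a ν)) B (Dmat_transpose h (a ν)) hBt
  refine tendsto_of_tendsto_of_tendsto_of_le_of_le' hlow hupp ?_ ?_
  · filter_upwards [hε0.eventually_lt_const one_pos] with ν hν
    rw [← mul_div_assoc]
    refine div_le_div_of_nonneg_right ?_ (Real.rpow_nonneg (ha_pos ν).le _)
    have := eigR_le_mul (hW' ν) (hW ν) zero_le_one (sub_nonneg.2 hν.le) (fun v => by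
      rw [quad_W _ _ _ (Dmat_transpose h (a ν)), quad_W _ _ _ (Dmat_transpose h (a ν))]
      have := (abs_le.1 (hquad ν (Dmat h (a ν) *ᵥ Pᵀ *ᵥ v))).1
      linarith) q
    simpa using this
  · refine Eventually.of_forall fun ν => ?_
    rw [← mul_div_assoc]
    refine div_le_div_of_nonneg_right ?_ (Real.rpow_nonneg (ha_pos ν).le _)
    have := eigR_le_mul (hW ν) (hW' ν) (add_nonneg zero_le_one (hεnn ν)) zero_le_one (fun v => by
      rw [quad_W _ _ _ (Dmat_transpose h (a ν)), quad_W _ _ _ (Dmat_transpose h (a ν))]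
      have := (abs_le.1 (hquad ν (Dmat h (a ν) *ᵥ Pᵀ *ᵥ v))).2
      linarith) q
    simpa using this

/-! ### The function `g_{q,α}` as a quadratic form -/

/-- The vector `(0, …, 0, α, x_{q+1}, …, x_n)` of `ℝⁿ`, with `α` at position `q`. -/
def extendBy {n : ℕ} (q : Fin n) (α : ℝ) (x : {i : Fin n // q < i} → ℝ) : Fin n → ℝ :=
  fun j => if hj : q < j then x ⟨j, hj⟩ else if j = q then α else 0

theorem sum_mul_extendBy {n : ℕ} (q : Fin n) (α : ℝ) (x : {i : Fin n // q < i} → ℝ)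
    (f : Fin n → ℝ) :
    ∑ j, f j * extendBy q α x j = f q * α + ∑ j : {i : Fin n // q < i}, f j * x j := by
  rw [← Fintype.sum_subtype_add_sum_subtype (fun j => q < j), add_comm]
  congr 1
  · rw [Finset.sum_eq_single ⟨q, lt_irrefl q⟩]
    · simp [extendBy]
    · rintro ⟨j, hj⟩ - hne
      have : j ≠ q := fun h => hne (Subtype.ext h)
      simp [extendBy, hj, this]
    · simp
  · exact Finset.sum_congr rfl fun j _ => by simp [extendBy, j.2]

/-- For symmetric `B`, `g_{q,α}(x)` is the quadratic form of `B` at `(0, …, 0, α, x)`. -/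
theorem gfun_eq {n : ℕ} {B : Matrix (Fin n) (Fin n) ℝ} (hB : Bᵀ = B) (q : Fin n) (α : ℝ)
    (x : {i : Fin n // q < i} → ℝ) :
    gfun B q α x = extendBy q α x ⬝ᵥ B *ᵥ extendBy q α x := by
  have hs : ∀ i j, B j i = B i j := fun i j => congrFun (congrFun hB i) j
  -- The full double sum is its diagonal plus twice the part above it.
  have hdbl : ∑ i : {i : Fin n // q < i}, ∑ j : {i : Fin n // q < i}, B i j * x i * x j =
      ∑ i : {i : Fin n // q < i}, B i i * x i ^ 2 +
      2 * ∑ i : {i : Fin n // q < i}, ∑ j : {i : Fin n // q < i},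
        if (i : Fin n) < (j : Fin n) then B i j * x i * x j else 0 := by
    have hsw : ∑ i : {i : Fin n // q < i}, ∑ j : {i : Fin n // q < i},
        (if (i : Fin n) < (j : Fin n) then B i j * x i * x j else 0) =
        ∑ i : {i : Fin n // q < i}, ∑ j : {i : Fin n // q < i},
        if (j : Fin n) < (i : Fin n) then B i j * x i * x j else 0 := by
      rw [Finset.sum_comm]
      refine Finset.sum_congr rfl fun i _ => Finset.sum_congr rfl fun j _ => ?_
      rw [hs i j]; split_ifs <;> ring
    have hdiag : ∀ i : {i : Fin n // q < i}, B i i * x i ^ 2 =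
        ∑ j : {i : Fin n // q < i}, if i = j then B i j * x i * x j else 0 := fun i => by
      simp; ring
    rw [two_mul]
    nth_rewrite 2 [hsw]
    simp only [hdiag, ← Finset.sum_add_distrib]
    refine Finset.sum_congr rfl fun i _ => Finset.sum_congr rfl fun j _ => ?_
    rcases lt_trichotomy (i : Fin n) j with hij | hij | hij
    · simp [hij, hij.not_gt, Subtype.ext_iff, hij.ne]
    · simp [Subtype.ext_iff, hij]
    · simp [hij, hij.not_gt, Subtype.ext_iff, hij.ne']
  rw [dotProduct_comm, dotProduct, sum_mul_extendBy]
  simp only [mulVec, dotProduct, sum_mul_extendBy]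
  simp only [add_mul, Finset.sum_add_distrib, Finset.sum_mul]
  have h1 : ∑ i : {i : Fin n // q < i}, ∑ j : {i : Fin n // q < i}, B i j * x j * x i =
      ∑ i : {i : Fin n // q < i}, ∑ j : {i : Fin n // q < i}, B i j * x i * x j :=
    Finset.sum_congr rfl fun i _ => Finset.sum_congr rfl fun j _ => by ring
  have h2 : ∑ i : {i : Fin n // q < i}, B i q * α * x i
      = α * ∑ i : {i : Fin n // q < i}, B q i * x i := by
    rw [Finset.mul_sum]
    exact Finset.sum_congr rfl fun i _ => by rw [hs q i]; ring
  have h3 : ∑ i : {i : Fin n // q < i}, B q i * x i * α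
      = α * ∑ i : {i : Fin n // q < i}, B q i * x i := by
    rw [Finset.mul_sum]
    exact Finset.sum_congr rfl fun i _ => by ring
  rw [h1, h2, h3, hdbl, gfun]
  ring

/-- A point `x` at which the coordinates `i > q` of `B (0, …, 0, α, x)` vanish, i.e. a critical point
of `g_{q,α}`, is its strict global minimizer. -/
theorem gfun_lt {n : ℕ} {B : Matrix (Fin n) (Fin n) ℝ} (hB : B.PosDef) (q : Fin n) (α : ℝ)
    (x y : {i : Fin n // q < i} → ℝ) (hx : ∀ i, q < i → (B *ᵥ extendBy q α x) i = 0)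
    (hne : y ≠ x) : gfun B q α x < gfun B q α y := by
  have hBt : Bᵀ = B := by simpa using hB.isHermitian.eq
  set X := extendBy q α x with hX
  set Z := extendBy q 0 (y - x) with hZ
  have hY : extendBy q α y = X + Z := by
    funext j
    by_cases hj : q < j
    · simp [hX, hZ, extendBy, hj]
    · by_cases hj' : j = q <;> simp [hX, hZ, extendBy, hj, hj']
  have hZ0 : Z ≠ 0 := fun h0 => hne <| funext fun i => by
    have := congrFun h0 (i : Fin n)
    simpa [hZ, extendBy, i.2, sub_eq_zero] using this
  have horth : Z ⬝ᵥ B *ᵥ X = 0 := Finset.sum_eq_zero fun i _ => by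
    by_cases hi : q < i
    · rw [hx i hi, mul_zero]
    · by_cases hi' : i = q <;> simp [hZ, extendBy, hi, hi']
  have horth' : X ⬝ᵥ B *ᵥ Z = 0 := by
    rw [dotProduct_mulVec, ← mulVec_transpose, hBt, dotProduct_comm, horth]
  rw [gfun_eq hBt, gfun_eq hBt, hY, ← hX, mulVec_add, dotProduct_add, add_dotProduct,
    add_dotProduct, horth, horth']
  have := hB.dotProduct_mulVec_pos hZ0
  simp only [star_trivial] at this
  linarith

/-- The principal submatrix of `B` on the indices `i > q`. -/
def block {n : ℕ} (B : Matrix (Fin n) (Fin n) ℝ) (q : Fin n) :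
    Matrix {i : Fin n // q < i} {i : Fin n // q < i} ℝ :=
  B.submatrix Subtype.val Subtype.val

theorem posDef_sub {n : ℕ} {B : Matrix (Fin n) (Fin n) ℝ} (hB : B.PosDef) (q : Fin n) :
    (block B q).PosDef :=
  hB.submatrix Subtype.val_injective

/-- The minimizer of `g_{q,α}`, namely the solution of `∑_{j > q} b_{ij} x_j = - b_{iq} α`, `i > q`. -/
noncomputable def minimizer {n : ℕ} (B : Matrix (Fin n) (Fin n) ℝ) (q : Fin n) (α : ℝ) :
    {i : Fin n // q < i} → ℝ :=
  (block B q)⁻¹ *ᵥ fun i => -(B i q * α)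

theorem mulVec_extendBy_minimizer {n : ℕ} {B : Matrix (Fin n) (Fin n) ℝ} (hB : B.PosDef)
    (q : Fin n) (α : ℝ) (i : Fin n) (hi : q < i) :
    (B *ᵥ extendBy q α (minimizer B q α)) i = 0 := by
  have hdet := (posDef_sub hB q).det_pos.ne'
  have h1 : block B q *ᵥ minimizer B q α =
      fun i : {i : Fin n // q < i} => -(B i q * α) := by
    rw [minimizer, mulVec_mulVec, mul_nonsing_inv _ hdet.isUnit, one_mulVec]
  have h2 := congrFun h1 ⟨i, hi⟩
  simp only [mulVec, dotProduct, block, submatrix_apply] at h2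
  simp only [mulVec, dotProduct, sum_mul_extendBy]
  linarith

/-- Solutions of linear systems depend continuously on the data at an invertible matrix. -/
theorem tendsto_of_mulVec {ι : Type*} [Fintype ι] [DecidableEq ι] {C : Matrix ι ι ℝ}
    (hC : C.det ≠ 0) {Ck : ℕ → Matrix ι ι ℝ} (hCk : Tendsto Ck atTop (𝓝 C))
    {x : ℕ → ι → ℝ} {r : ι → ℝ} (hr : Tendsto (fun ν => Ck ν *ᵥ x ν) atTop (𝓝 r)) :
    Tendsto x atTop (𝓝 (C⁻¹ *ᵥ r)) := by
  have hd : Tendsto (fun ν => (Ck ν).det) atTop (𝓝 C.det) :=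
    ((continuous_id.matrix_det).tendsto C).comp hCk
  have hadj : Tendsto (fun ν => (Ck ν).adjugate) atTop (𝓝 C.adjugate) :=
    ((continuous_id.matrix_adjugate).tendsto C).comp hCk
  -- Cramer: `x = det(Ck)⁻¹ adj(Ck) (Ck x)` once `det Ck ≠ 0`.
  have hlim : Tendsto (fun ν => (Ck ν).det⁻¹ • ((Ck ν).adjugate *ᵥ (Ck ν *ᵥ x ν))) atTop
      (𝓝 (C.det⁻¹ • (C.adjugate *ᵥ r))) := by
    refine (hd.inv₀ hC).smul ?_
    exact tendsto_pi_nhds.2 fun i => tendsto_finsetSum _ fun j _ =>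
      (tendsto_pi_nhds.1 (tendsto_pi_nhds.1 hadj i) j).mul (tendsto_pi_nhds.1 hr j)
  have he : C⁻¹ *ᵥ r = C.det⁻¹ • (C.adjugate *ᵥ r) := by
    rw [Matrix.inv_def, Ring.inverse_eq_inv', smul_mulVec]
  rw [he]
  refine hlim.congr' ?_
  filter_upwards [hd.eventually_ne hC] with ν hν
  rw [mulVec_mulVec, adjugate_mul, smul_mulVec, one_mulVec, smul_smul, inv_mul_cancel₀ hν,
    one_smul]

/-! ### The rescaled eigenvector -/

/-- The eigenvector equation in the rescaled coordinates `X_i = ⟨p_i, u⟩ a ^ (h_i - h_q)`. -/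
theorem rescaled_eqs {n : ℕ} (h : Fin n → ℝ) {P B : Matrix (Fin n) (Fin n) ℝ} (hP : IsUnit P)
    (q : Fin n) {a : ℝ} (ha : 0 < a) {u : Fin n → ℝ} (hu : ∑ i, u i ^ 2 = 1) {l : ℝ}
    (heig : (P * Dmat h a * B * Dmat h a * Pᵀ) *ᵥ u = l • u)
    {X : Fin n → ℝ} (hX : X = fun i => (Pᵀ *ᵥ u) i * a ^ (h i - h q)) :
    (X ⬝ᵥ B *ᵥ X = l / a ^ (2 * h q)) ∧
      ∀ i, (B *ᵥ X) i = l / a ^ (2 * h q) * a ^ (h q - h i) * (P⁻¹ *ᵥ u) i := by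
  have hD : Dmat h a *ᵥ Pᵀ *ᵥ u = a ^ h q • X := by
    funext i
    rw [Dmat, mulVec_diagonal, hX, Pi.smul_apply, smul_eq_mul, Real.rpow_sub ha]
    field_simp
  have hpow : a ^ (2 * h q) = a ^ h q * a ^ h q := by rw [two_mul, Real.rpow_add ha]
  have hq0 : a ^ h q ≠ 0 := (Real.rpow_pos_of_pos ha _).ne'
  constructor
  · have h1 := quad_W P (Dmat h a) B (Dmat_transpose h a) u
    have huu : u ⬝ᵥ u = 1 := by simpa [dotProduct, sq] using hu
    rw [heig, hD, dotProduct_smul, huu, mulVec_smul, dotProduct_smul, smul_dotProduct] at h1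
    simp only [smul_eq_mul] at h1
    rw [hpow, eq_div_iff (mul_ne_zero hq0 hq0)]
    linarith
  · intro i
    have h1 : Dmat h a *ᵥ B *ᵥ Dmat h a *ᵥ Pᵀ *ᵥ u = l • P⁻¹ *ᵥ u := by
      have hdet : IsUnit P.det := (isUnit_iff_isUnit_det P).1 hP
      have := congrArg (fun w => P⁻¹ *ᵥ w) heig
      simp only [mulVec_smul] at this
      rw [← this]
      simp only [← mulVec_mulVec]
      rw [mulVec_mulVec (M := P⁻¹) (N := P), nonsing_inv_mul P hdet, one_mulVec]
    have h2 := congrFun h1 i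
    rw [hD, mulVec_smul, Dmat, mulVec_diagonal] at h2
    simp only [Pi.smul_apply, smul_eq_mul] at h2
    have hi0 : a ^ h i ≠ 0 := (Real.rpow_pos_of_pos ha _).ne'
    rw [hpow, Real.rpow_sub ha]
    field_simp
    linarith

/-- The theorem for deterministic sequences `Bk → B` and `u → ulim`. -/
theorem tendsto_deterministic {n : ℕ} (h : Fin n → ℝ) (hmono : StrictMono h)
    (P : Matrix (Fin n) (Fin n) ℝ) (hP : IsUnit P)
    (B : Matrix (Fin n) (Fin n) ℝ) (hB : B.PosDef) (q : Fin n) {ξ : ℝ}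
    (hξ : Tendsto (fun c : ℝ => eigR (P * Dmat h c * B * Dmat h c * Pᵀ) q / c ^ (2 * h q))
      atTop (𝓝 ξ))
    (a : ℕ → ℝ) (ha_pos : ∀ ν, 0 < a ν) (ha : Tendsto a atTop atTop)
    (Bk : ℕ → Matrix (Fin n) (Fin n) ℝ) (hsymm : ∀ ν, (Bk ν).IsSymm)
    (hlim : ∀ i j, Tendsto (fun ν => Bk ν i j) atTop (𝓝 (B i j)))
    (u : ℕ → Fin n → ℝ) (ulim : Fin n → ℝ) (hunit : ∀ ν, ∑ i, u ν i ^ 2 = 1)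
    (heig : ∀ ν, (P * Dmat h (a ν) * Bk ν * Dmat h (a ν) * Pᵀ) *ᵥ (u ν) =
        eigR (P * Dmat h (a ν) * Bk ν * Dmat h (a ν) * Pᵀ) q • u ν)
    (hu : Tendsto u atTop (𝓝 ulim)) :
    Tendsto (fun ν => fun i : {i : Fin n // q < i} =>
          (∑ t, P t (i : Fin n) * u ν t) * a ν ^ (h i - h q)) atTop
        (𝓝 (minimizer B q (∑ t, P t q * ulim t))) ∧
      ξ = gfun B q (∑ t, P t q * ulim t) (minimizer B q (∑ t, P t q * ulim t)) := by
  set α := ∑ t, P t q * ulim t with hα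
  have hs := ratio_tendsto h P B hB q hξ a ha_pos ha Bk hsymm hlim
  set s : ℕ → ℝ :=
    fun ν => eigR (P * Dmat h (a ν) * Bk ν * Dmat h (a ν) * Pᵀ) q / a ν ^ (2 * h q) with hsdef
  set X : ℕ → Fin n → ℝ := fun ν i => (Pᵀ *ᵥ u ν) i * a ν ^ (h i - h q) with hX
  have hXs : ∀ ν, X ν ⬝ᵥ Bk ν *ᵥ X ν = s ν := fun ν =>
    (rescaled_eqs h hP q (ha_pos ν) (hunit ν) (heig ν) rfl).1
  have hBX : ∀ ν i, (Bk ν *ᵥ X ν) i = s ν * a ν ^ (h q - h i) * (P⁻¹ *ᵥ u ν) i := fun ν =>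
    (rescaled_eqs h hP q (ha_pos ν) (hunit ν) (heig ν) rfl).2
  have hmv : ∀ (Q : Matrix (Fin n) (Fin n) ℝ) i,
      Tendsto (fun ν => (Q *ᵥ u ν) i) atTop (𝓝 ((Q *ᵥ ulim) i)) := fun Q i => by
    have hc : Continuous fun w : Fin n → ℝ => (Q *ᵥ w) i := by fun_prop
    exact (hc.tendsto ulim).comp hu
  have hpow0 : ∀ i j, i < j → Tendsto (fun ν => a ν ^ (h i - h j)) atTop (𝓝 0) := by
    intro i j hij
    have := (tendsto_rpow_neg_atTop (sub_pos.2 (hmono hij))).comp ha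
    simpa [Function.comp_def] using this
  have hXle : ∀ j, ¬ q < j → Tendsto (fun ν => X ν j) atTop (𝓝 (if j = q then α else 0)) := by
    intro j hj
    by_cases hjq : j = q
    · subst hjq
      have := hmv Pᵀ j
      simpa [hX, hα, mulVec, dotProduct] using this
    · have := (hmv Pᵀ j).mul (hpow0 j q (lt_of_le_of_ne (not_lt.1 hj) hjq))
      simpa [hX, hjq] using this
  have hxt : Tendsto (fun ν => fun i : {i : Fin n // q < i} => X ν i) atTop
      (𝓝 (minimizer B q α)) := by
    refine tendsto_of_mulVec (posDef_sub hB q).det_pos.ne'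
      (Ck := fun ν => block (Bk ν) q) ?_ ?_
    · exact tendsto_pi_nhds.2 fun i => tendsto_pi_nhds.2 fun j => hlim i j
    · refine tendsto_pi_nhds.2 fun i => ?_
      have hsplit : ∀ ν, (Bk ν *ᵥ X ν) i - ∑ j : {j : Fin n // ¬ q < j}, Bk ν i j * X ν j =
          (block (Bk ν) q *ᵥ
            fun i : {i : Fin n // q < i} => X ν i) i := fun ν => by
        rw [sub_eq_iff_eq_add]
        exact (Fintype.sum_subtype_add_sum_subtype (fun j => q < j) _).symm
      have hsum : ∑ j : {j : Fin n // ¬ q < j}, B i j * (if (j : Fin n) = q then α else 0) =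
          B i q * α := by
        rw [Finset.sum_eq_single ⟨q, lt_irrefl q⟩]
        · simp
        · rintro ⟨j, hj⟩ - hne
          have : j ≠ q := fun h => hne (Subtype.ext h)
          simp [this]
        · simp
      have h1 : Tendsto (fun ν => (Bk ν *ᵥ X ν) i) atTop (𝓝 0) := by
        simp only [hBX]
        simpa using (hs.mul (hpow0 q i i.2)).mul (hmv P⁻¹ i)
      have h2 : Tendsto (fun ν => ∑ j : {j : Fin n // ¬ q < j}, Bk ν i j * X ν j) atTop
          (𝓝 (B i q * α)) := by
        rw [← hsum]
        exact tendsto_finsetSum _ fun j _ => (hlim i j).mul (hXle j j.2)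
      have h3 := h1.sub h2
      simp only [hsplit, zero_sub] at h3
      exact h3
  refine ⟨hxt, ?_⟩
  have hBt : Bᵀ = B := by simpa using hB.isHermitian.eq
  have hXlim : ∀ j, Tendsto (fun ν => X ν j) atTop
      (𝓝 (extendBy q α (minimizer B q α) j)) := fun j => by
    by_cases hj : q < j
    · simpa [extendBy, hj] using (tendsto_pi_nhds.1 hxt) ⟨j, hj⟩
    · simpa [extendBy, hj] using hXle j hj
  rw [gfun_eq hBt]
  refine tendsto_nhds_unique hs ?_
  change Tendsto s _ _
  simp only [← funext hXs, dotProduct, mulVec]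
  exact tendsto_finsetSum _ fun i _ => (hXlim i).mul
    (tendsto_finsetSum _ fun j _ => (hlim i j).mul (hXlim j))

/-! ### Convergence in probability -/

/-- Finitely many sequences converging in measure converge almost surely along a common
subsequence of any given subsequence. -/
theorem exists_common_subseq {Ω ι : Type*} [MeasurableSpace Ω] {μ : Measure Ω}
    {f : ι → ℕ → Ω → ℝ} {g : ι → Ω → ℝ}
    (hf : ∀ i, TendstoInMeasure μ (f i) atTop (g i)) (S : Finset ι) {ns : ℕ → ℕ}
    (hns : StrictMono ns) :
    ∃ ns' : ℕ → ℕ, StrictMono ns' ∧ ∀ i ∈ S, ∀ᵐ ω ∂μ,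
      Tendsto (fun k => f i (ns (ns' k)) ω) atTop (𝓝 (g i ω)) := by
  classical
  induction S using Finset.induction_on with
  | empty => exact ⟨id, strictMono_id, by simp⟩
  | insert i S _ ih =>
    obtain ⟨n1, hn1, hS⟩ := ih
    obtain ⟨n2, hn2, hi⟩ :=
      ((hf i).comp (hns.comp hn1).tendsto_atTop).exists_seq_tendsto_ae
    refine ⟨n1 ∘ n2, hn1.comp hn2, fun j hj => ?_⟩
    rcases Finset.mem_insert.1 hj with rfl | hj
    · exact hi
    · filter_upwards [hS j hj] with ω hω
      exact hω.comp hn2.tendsto_atTop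

/-- Proposition 3.1(iv): under the setting of Proposition 3.1, for
`q ∈ {1,…,n-1}` and unit eigenvectors `u_q(ν)` of `W_ν` for `λ_q(W_ν)` converging in
probability to the deterministic unit vector `u_q`, the random vector
`(⟨p_{·,i}, u_q(ν)⟩ a_ν^{h_i−h_q})_{i>q}` converges in probability to the unique global
minimizer `x_{q,*}` of `g_{q,α}` with `α = ⟨p_{·,q}, u_q⟩`, and
`ξ_q(B) = g_{q,α}(x_{q,*})`. -/
theorem stmt6 {n : ℕ}
    {Ω : Type*} [MeasurableSpace Ω] (μ : Measure Ω) [IsProbabilityMeasure μ]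
    (h : Fin n → ℝ) (hmono : StrictMono h)
    (h0 : ∀ i, 0 < h i) (h1 : ∀ i, h i < 1)
    (P : Matrix (Fin n) (Fin n) ℝ) (hP : IsUnit P)
    (hPcol : ∀ j, ∑ i, P i j ^ 2 = 1)
    (B : Matrix (Fin n) (Fin n) ℝ) (hB : B.PosDef)
    (a : ℕ → ℝ) (ha_pos : ∀ ν, 0 < a ν) (ha : Tendsto a atTop atTop)
    (Bhat : ℕ → Ω → Matrix (Fin n) (Fin n) ℝ)
    (hBhat_meas : ∀ ν (i j : Fin n), Measurable fun ω => Bhat ν ω i j)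
    (hBhat_symm : ∀ ν ω, (Bhat ν ω).IsSymm)
    (hBhat_lim : ∀ i j : Fin n,
      TendstoInMeasure μ (fun ν ω => Bhat ν ω i j) atTop (fun _ => B i j))
    (q : Fin n) (hq : (q : ℕ) < n - 1)
    (u : ℕ → Ω → Fin n → ℝ) (ulim : Fin n → ℝ)
    (hu_meas : ∀ ν, Measurable (u ν))
    (hu_unit : ∀ ν ω, ∑ i, u ν ω i ^ 2 = 1)
    (hu_eig : ∀ ν, ∀ᵐ ω ∂μ,
      (P * Dmat h (a ν) * Bhat ν ω * Dmat h (a ν) * Pᵀ).mulVec (u ν ω) =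
        eigR (P * Dmat h (a ν) * Bhat ν ω * Dmat h (a ν) * Pᵀ) q • u ν ω)
    (hulim_unit : ∑ i, ulim i ^ 2 = 1)
    (hu_lim : TendstoInMeasure μ u atTop (fun _ => ulim))
    (ξ : ℝ)
    (hξ : Tendsto (fun c : ℝ => eigR (P * Dmat h c * B * Dmat h c * Pᵀ) q / c ^ (2 * h q))
      atTop (𝓝 ξ)) :
    ∃ xstar : {i : Fin n // q < i} → ℝ,
      (∀ y : {i : Fin n // q < i} → ℝ, y ≠ xstar →
        gfun B q (∑ t, P t q * ulim t) xstar < gfun B q (∑ t, P t q * ulim t) y) ∧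
      TendstoInMeasure μ
        (fun ν ω => fun i : {i : Fin n // q < i} =>
          (∑ t, P t (i : Fin n) * u ν ω t) * a ν ^ (h i - h q))
        atTop (fun _ => xstar) ∧
      ξ = gfun B q (∑ t, P t q * ulim t) xstar := by
  set α := ∑ t, P t q * ulim t with hα
  have key : ∀ ns : ℕ → ℕ, StrictMono ns → ∃ ns' : ℕ → ℕ, StrictMono ns' ∧ ∀ᵐ ω ∂μ,
      Tendsto (fun k => fun i : {i : Fin n // q < i} =>
          (∑ t, P t (i : Fin n) * u (ns (ns' k)) ω t) * a (ns (ns' k)) ^ (h i - h q)) atTop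
        (𝓝 (minimizer B q α)) ∧ ξ = gfun B q α (minimizer B q α) := by
    intro ns hns
    obtain ⟨n1, hn1, hB1⟩ := exists_common_subseq
      (f := fun (p : Fin n × Fin n) ν ω => Bhat ν ω p.1 p.2) (g := fun p _ => B p.1 p.2)
      (fun p => hBhat_lim p.1 p.2) Finset.univ hns
    obtain ⟨n2, hn2, hu2⟩ :=
      (hu_lim.comp (hns.comp hn1).tendsto_atTop).exists_seq_tendsto_ae
    refine ⟨n1 ∘ n2, hn1.comp hn2, ?_⟩
    have hBall : ∀ᵐ ω ∂μ, ∀ p : Fin n × Fin n,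
        Tendsto (fun k => Bhat (ns (n1 k)) ω p.1 p.2) atTop (𝓝 (B p.1 p.2)) :=
      ae_all_iff.2 fun p => hB1 p (Finset.mem_univ p)
    filter_upwards [hBall, hu2, ae_all_iff.2 hu_eig] with ω hBω huω heω
    exact tendsto_deterministic h hmono P hP B hB q hξ _ (fun k => ha_pos _)
      (ha.comp (hns.comp (hn1.comp hn2)).tendsto_atTop)
      (fun k => Bhat (ns (n1 (n2 k))) ω) (fun k => hBhat_symm _ ω)
      (fun i j => (hBω (i, j)).comp hn2.tendsto_atTop)
      _ ulim (fun k => hu_unit _ ω) (fun k => heω _) huω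
  refine ⟨minimizer B q α, fun y hy =>
    gfun_lt hB q α _ y (mulVec_extendBy_minimizer hB q α) hy, ?_, ?_⟩
  · rw [exists_seq_tendstoInMeasure_atTop_iff]
    · intro ns hns
      obtain ⟨ns', hns', hae⟩ := key ns hns
      exact ⟨ns', hns', hae.mono fun ω hω => hω.1⟩
    · intro ν
      have : Measurable fun ω => fun i : {i : Fin n // q < i} =>
          (∑ t, P t (i : Fin n) * u ν ω t) * a ν ^ (h i - h q) := by
        refine measurable_pi_iff.2 fun i => Measurable.mul_const ?_ _
        exact Finset.measurable_sum _ fun t _ =>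
          ((measurable_pi_iff.1 (hu_meas ν)) t).const_mul _
      exact this.aestronglyMeasurable
  · obtain ⟨ns', -, hae⟩ := key id strictMono_id
    exact hae.exists.choose_spec.2
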